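/- Let n ∈ ℕ and let F : 𝒜₀(ℝⁿ) × ℝⁿ → ℝ be moderate. Assume that F satisfies the zeroth-order negligibility estimate: for every compact K ⊂ ℝⁿ and every m ∈ ℕ there is q ∈ ℕ such that for all φ ∈ 𝒜_q(ℝⁿ), sup_{x ∈ K} |F(φ_ε, x)| = O(ε^m) as ε → 0⁺. Then F is negligible, i.e., the corresponding estimates hold for all derivatives ∂_x^k F as well. -/

import Mathlib

open MeasureTheory Filter Topology

noncomputable section

namespace Colombeau

/-- `φ ∈ 𝒟(ℝⁿ)`: smooth compactly supported function. -/
def IsTestFunction (n : ℕ) (φ : (Fin n → ℝ) → ℝ) : Prop :=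
  ContDiff ℝ (⊤ : ℕ∞) φ ∧ HasCompactSupport φ

/-- `φ ∈ 𝒜₀(ℝⁿ)`: test function with integral one. -/
def IsA0 (n : ℕ) (φ : (Fin n → ℝ) → ℝ) : Prop :=
  IsTestFunction n φ ∧ ∫ x, φ x = 1

/-- `φ ∈ 𝒜_q(ℝⁿ)`: vanishing moments up to order `q`. -/
def IsAq (n q : ℕ) (φ : (Fin n → ℝ) → ℝ) : Prop :=
  IsA0 n φ ∧ ∀ i : Fin n → ℕ, 1 ≤ ∑ j, i j → ∑ j, i j ≤ q →
    ∫ x, (∏ j, x j ^ i j) * φ x = 0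

/-- the scaled mollifier `φ_ε(x) = ε⁻ⁿ φ(x/ε)`. -/
def scaled (n : ℕ) (φ : (Fin n → ℝ) → ℝ) (ε : ℝ) : (Fin n → ℝ) → ℝ :=
  fun x => (ε ^ n)⁻¹ * φ (ε⁻¹ • x)

/-- partial derivative `∂_i`. -/
def partialD {n : ℕ} (i : Fin n) (f : (Fin n → ℝ) → ℝ) : (Fin n → ℝ) → ℝ :=
  fun x => fderiv ℝ f x (Pi.single i 1)

/-- multi-index derivative `∂^k = ∂₁^{k₁} ⋯ ∂_n^{k_n}`. -/
def multiD {n : ℕ} (k : Fin n → ℕ) (f : (Fin n → ℝ) → ℝ) : (Fin n → ℝ) → ℝ :=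
  (List.finRange n).foldl (fun g i => (partialD i)^[k i] g) f

/-- Moderate functions of the basic space. -/
def Moderate (n : ℕ) (F : ((Fin n → ℝ) → ℝ) → (Fin n → ℝ) → ℝ) : Prop :=
  ∀ K : Set (Fin n → ℝ), IsCompact K → ∀ k : Fin n → ℕ,
    ∃ N : ℕ, ∀ φ, IsAq n N φ →
      ∃ C > 0, ∀ᶠ ε in 𝓝[>] (0:ℝ), ∀ x ∈ K,
        |multiD k (F (scaled n φ ε)) x| ≤ C * ε ^ (-(N:ℤ))

/-- Negligible functions of the basic space. -/
def Negligible (n : ℕ) (F : ((Fin n → ℝ) → ℝ) → (Fin n → ℝ) → ℝ) : Prop :=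
  ∀ K : Set (Fin n → ℝ), IsCompact K → ∀ k : Fin n → ℕ, ∀ m : ℕ,
    ∃ q : ℕ, ∀ φ, IsAq n q φ →
      ∃ C > 0, ∀ᶠ ε in 𝓝[>] (0:ℝ), ∀ x ∈ K,
        |multiD k (F (scaled n φ ε)) x| ≤ C * ε ^ m

/-!
The idea is Landau's inequality: on a segment of length `h`, a first derivative is bounded by
`2 A / h + B h / 2`, where `A` bounds the function and `B` its second derivative. If `∂^k F` is
negligible and `∂_i² ∂^k F = O(ε^{-N})`, then `h = ε^{m+N}` balances `A = O(ε^{2m+N})` against `B`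
and gives `∂_i ∂^k F = O(ε^m)`. The segments leave `K`, but stay in its closed `1`-thickening, which
is again compact. Building up `k` one unit at a time, in increasing order of the coordinates, keeps
`∂_i` outermost in `∂^{k+e_i}`, so partial derivatives never need to be interchanged.
-/

section Landau

variable {F : Type*} [NormedAddCommGroup F] [NormedSpace ℝ F]

lemma norm_sub_sub_smul_deriv_le {g g' g'' : ℝ → F} {a b B : ℝ} (hab : a ≤ b)
    (hg : ∀ t ∈ Set.Icc a b, HasDerivWithinAt g (g' t) (Set.Icc a b) t)
    (hg' : ∀ t ∈ Set.Icc a b, HasDerivWithinAt g' (g'' t) (Set.Icc a b) t)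
    (hB : ∀ t ∈ Set.Icc a b, ‖g'' t‖ ≤ B) :
    ‖g b - g a - (b - a) • g' a‖ ≤ B * (b - a) ^ 2 / 2 := by
  have deriv_sub_le : ∀ t ∈ Set.Icc a b, ‖g' t - g' a‖ ≤ B * (t - a) :=
    norm_image_sub_le_of_norm_deriv_le_segment' hg' fun t ht => hB t (Set.Ico_subset_Icc_self ht)
  have hasDeriv_remainder : ∀ t ∈ Set.Icc a b, HasDerivWithinAt
      (fun s => g s - g a - (s - a) • g' a) (g' t - g' a) (Set.Icc a b) t := fun t ht => by
    simpa using ((hg t ht).sub_const (g a)).fun_sub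
      (((hasDerivWithinAt_id t _).sub_const a).smul_const (g' a))
  have hasDeriv_bound : ∀ t,
      HasDerivAt (fun s => B * (s - a) ^ 2 / 2) (B * (t - a)) t := fun t =>
    (((((hasDerivAt_id' t).sub_const a).fun_pow 2).const_mul B).div_const 2).congr_deriv (by
      push_cast
      ring)
  exact image_norm_le_of_norm_deriv_right_le_deriv_boundary
    (fun t ht => (hasDeriv_remainder t ht).continuousWithinAt)
    (fun t ht => (hasDeriv_remainder t (Set.Ico_subset_Icc_self ht)).mono_of_mem_nhdsWithin
      (Icc_mem_nhdsGE_of_mem ht))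
    (by simp) hasDeriv_bound (fun t ht => deriv_sub_le t (Set.Ico_subset_Icc_self ht))
    (Set.right_mem_Icc.2 hab)

theorem landau_inequality {g g' g'' : ℝ → F} {a b A B : ℝ} (hab : a < b)
    (hg : ∀ t ∈ Set.Icc a b, HasDerivWithinAt g (g' t) (Set.Icc a b) t)
    (hg' : ∀ t ∈ Set.Icc a b, HasDerivWithinAt g' (g'' t) (Set.Icc a b) t)
    (hA : ∀ t ∈ Set.Icc a b, ‖g t‖ ≤ A) (hB : ∀ t ∈ Set.Icc a b, ‖g'' t‖ ≤ B) :
    ‖g' a‖ ≤ 2 * A / (b - a) + B * (b - a) / 2 := by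
  have hpos : 0 < b - a := sub_pos.2 hab
  have key : (b - a) * ‖g' a‖ ≤ 2 * A + B * (b - a) ^ 2 / 2 := calc
    (b - a) * ‖g' a‖ = ‖g b - g a - (g b - g a - (b - a) • g' a)‖ := by
      rw [sub_sub_cancel, norm_smul, Real.norm_of_nonneg hpos.le]
    _ ≤ ‖g b‖ + ‖g a‖ + ‖g b - g a - (b - a) • g' a‖ :=
      (norm_sub_le _ _).trans (by gcongr; exact norm_sub_le _ _)
    _ ≤ A + A + B * (b - a) ^ 2 / 2 := by
      gcongr
      · exact hA b (Set.right_mem_Icc.2 hab.le)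
      · exact hA a (Set.left_mem_Icc.2 hab.le)
      · exact norm_sub_sub_smul_deriv_le hab.le hg hg' hB
    _ = 2 * A + B * (b - a) ^ 2 / 2 := by rw [two_mul]
  calc ‖g' a‖ ≤ (2 * A + B * (b - a) ^ 2 / 2) / (b - a) := (le_div_iff₀' hpos).2 key
    _ = 2 * A / (b - a) + B * (b - a) / 2 := by field_simp

end Landau

lemma hasDerivAt_comp_add_smul {𝕜 E F : Type*} [NontriviallyNormedField 𝕜]
    [NormedAddCommGroup E] [NormedSpace 𝕜 E] [NormedAddCommGroup F] [NormedSpace 𝕜 F]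
    {f : E → F} {x v : E} {t : 𝕜} (hf : DifferentiableAt 𝕜 f (x + t • v)) :
    HasDerivAt (fun s : 𝕜 => f (x + s • v)) (fderiv 𝕜 f (x + t • v) v) t := by
  have hline : HasDerivAt (fun s : 𝕜 => x + s • v) v t := by
    simpa using ((hasDerivAt_id t).smul_const v).const_add x
  exact hf.hasFDerivAt.comp_hasDerivAt t hline

section PartialDerivatives

variable {n : ℕ}

lemma contDiff_partialD (i : Fin n) {f : (Fin n → ℝ) → ℝ} {r s : WithTop ℕ∞}
    (hf : ContDiff ℝ r f) (hrs : s + 1 ≤ r) : ContDiff ℝ s (partialD i f) :=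
  (hf.fderiv_right hrs).clm_apply contDiff_const

lemma abs_partialD_le (i : Fin n) {f : (Fin n → ℝ) → ℝ} (hf : ContDiff ℝ 2 f)
    {x : Fin n → ℝ} {h A B : ℝ} (hh : 0 < h)
    (hA : ∀ y ∈ Metric.closedBall x h, |f y| ≤ A)
    (hB : ∀ y ∈ Metric.closedBall x h, |partialD i (partialD i f) y| ≤ B) :
    |partialD i f x| ≤ 2 * A / h + B * h / 2 := by
  have hf' : ContDiff ℝ 1 (partialD i f) := contDiff_partialD i hf (by norm_num)
  have mem_ball : ∀ t ∈ Set.Icc 0 h, x + t • Pi.single i 1 ∈ Metric.closedBall x h :=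
    fun t ht => by
      simpa [norm_smul, Pi.norm_single, abs_of_nonneg ht.1] using ht.2
  simpa [partialD] using landau_inequality hh
    (fun t _ => (hasDerivAt_comp_add_smul (hf.differentiable two_ne_zero _)).hasDerivWithinAt)
    (fun t _ => (hasDerivAt_comp_add_smul (hf'.differentiable one_ne_zero _)).hasDerivWithinAt)
    (fun t ht => hA _ (mem_ball t ht)) (fun t ht => hB _ (mem_ball t ht))

lemma contDiff_multiD (k : Fin n → ℕ) {f : (Fin n → ℝ) → ℝ} (hf : ContDiff ℝ (⊤ : ℕ∞) f) :
    ContDiff ℝ (⊤ : ℕ∞) (multiD k f) :=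
  List.foldlRecOn _ _ hf fun _ hg i _ =>
    Function.Iterate.rec _ hg (fun _ h => contDiff_partialD i h (by simp)) (k i)

lemma multiD_zero (f : (Fin n → ℝ) → ℝ) : multiD 0 f = f := by
  simp [multiD]

lemma add_single_apply_eq_zero_of_lt {ι : Type*} [Preorder ι] [DecidableEq ι]
    {k : ι → ℕ} {i j : ι} (hk : ∀ j, i < j → k j = 0) (a : ℕ) (hij : i < j) :
    (k + Pi.single i a : ι → ℕ) j = 0 := by
  simp [hk j hij, hij.ne']

lemma multiD_add_single {k : Fin n → ℕ} {i : Fin n} (hk : ∀ j, i < j → k j = 0)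
    (f : (Fin n → ℝ) → ℝ) : multiD (k + Pi.single i 1) f = partialD i (multiD k f) := by
  obtain ⟨before, after, hsplit⟩ := List.append_of_mem (List.mem_finRange i)
  have hsorted := List.pairwise_lt_finRange n
  rw [hsplit, List.pairwise_append, List.pairwise_cons] at hsorted
  obtain ⟨-, ⟨lt_after, -⟩, before_lt⟩ := hsorted
  have foldl_after (k' : Fin n → ℕ) (hk' : ∀ j, i < j → k' j = 0) (g : (Fin n → ℝ) → ℝ) :
      after.foldl (fun g j => (partialD j)^[k' j] g) g = g :=
    List.foldlRecOn (motive := (· = g)) _ _ rfl fun _ hg j hj => by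
      rw [hk' j (lt_after j hj), Function.iterate_zero_apply, hg]
  have foldl_before :
      before.foldl (fun g j => (partialD j)^[(k + Pi.single i 1 : Fin n → ℕ) j] g) f =
      before.foldl (fun g j => (partialD j)^[k j] g) f :=
    List.foldl_ext _ _ _ fun g j hj => by
      simp [(before_lt j hj i List.mem_cons_self).ne]
  simp only [multiD, hsplit, List.foldl_append, List.foldl_cons, foldl_before]
  rw [foldl_after _ fun j => add_single_apply_eq_zero_of_lt hk 1, foldl_after k hk,
    Pi.add_apply, Pi.single_eq_same, Function.iterate_succ_apply']

@[elab_as_elim]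
lemma multiIndex_induction_on_max {ι : Type*} [LinearOrder ι] [Finite ι]
    {P : (ι → ℕ) → Prop} (zero : P 0)
    (add_single : ∀ k i, (∀ j, i < j → k j = 0) → P k → P (k + Pi.single i 1))
    (k : ι → ℕ) : P k := by
  suffices ∀ f : ι →₀ ℕ, P f by
    simpa using this (Finsupp.equivFunOnFinite.symm k)
  intro f
  induction f using Finsupp.induction_on_max with
  | zero => simpa using zero
  | single_add i b f hf hb ih =>
    clear hb
    induction b with
    | zero => simpa using ih
    | succ b ihb =>
      have hmax (j : ι) (hj : i < j) : (Finsupp.single i b + f) j = 0 := by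
        have : f j = 0 := Finsupp.notMem_support_iff.1 fun h => hj.not_gt (hf j h)
        simp [this, hj.ne]
      convert add_single _ i hmax ihb using 1
      rw [add_comm b 1, Finsupp.single_add, add_assoc, add_comm, Finsupp.coe_add,
        Finsupp.single_eq_pi_single]

end PartialDerivatives

section UniformOrder

/-- The family `f ε` is `O(ε ^ m)` as `ε → 0⁺`, uniformly on `K`. The exponent is an integer so that
both moderateness and negligibility estimates are of this form. -/
def IsUniformBigO {X : Type*} (K : Set X) (f : ℝ → X → ℝ) (m : ℤ) : Prop :=
  ∃ C > 0, ∀ᶠ ε in 𝓝[>] (0 : ℝ), ∀ x ∈ K, |f ε x| ≤ C * ε ^ m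

variable {n : ℕ}

lemma IsUniformBigO.partialD_of_partialD_partialD (i : Fin n)
    {f : ℝ → (Fin n → ℝ) → ℝ} {K : Set (Fin n → ℝ)} {m : ℤ} {c : ℕ}
    (hf : ∀ ε > 0, ContDiff ℝ 2 (f ε))
    (h0 : IsUniformBigO (Metric.cthickening 1 K) f (m + c))
    (h2 : IsUniformBigO (Metric.cthickening 1 K)
      (fun ε => partialD i (partialD i (f ε))) (m - c)) :
    IsUniformBigO K (fun ε => partialD i (f ε)) m := by
  obtain ⟨A, hA, h0⟩ := h0
  obtain ⟨B, hB, h2⟩ := h2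
  refine ⟨2 * A + B / 2, by positivity, ?_⟩
  filter_upwards [h0, h2, Ioo_mem_nhdsGT one_pos] with ε h0 h2 ⟨hε, hε_lt⟩ x hx
  have ball_subset : Metric.closedBall x (ε ^ c) ⊆ Metric.cthickening 1 K :=
    (Metric.closedBall_subset_closedBall (pow_le_one₀ hε.le hε_lt.le)).trans
      (Metric.closedBall_subset_cthickening hx 1)
  calc |partialD i (f ε) x|
      ≤ 2 * (A * ε ^ (m + c)) / ε ^ c + B * ε ^ (m - c) * ε ^ c / 2 :=
        abs_partialD_le i (hf ε hε) (pow_pos hε c)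
          (fun y hy => h0 y (ball_subset hy)) (fun y hy => h2 y (ball_subset hy))
    _ = (2 * A + B / 2) * ε ^ m := by
        rw [zpow_add₀ hε.ne', zpow_sub₀ hε.ne', zpow_natCast]
        field_simp

end UniformOrder

section BasicSpace

variable {n : ℕ} {φ : (Fin n → ℝ) → ℝ} {F : ((Fin n → ℝ) → ℝ) → (Fin n → ℝ) → ℝ}

lemma IsTestFunction.scaled (hφ : IsTestFunction n φ) {ε : ℝ} (hε : ε ≠ 0) :
    IsTestFunction n (scaled n φ ε) :=
  ⟨contDiff_const.mul (hφ.1.comp (contDiff_const_smul _)),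
    (hφ.2.comp_smul (inv_ne_zero hε)).mul_left⟩

lemma integral_scaled (φ : (Fin n → ℝ) → ℝ) {ε : ℝ} (hε : 0 < ε) :
    ∫ x, scaled n φ ε x = ∫ x, φ x := by
  simp only [scaled, integral_const_mul, Measure.integral_comp_inv_smul, Module.finrank_fin_fun,
    abs_of_pos (pow_pos hε n), smul_eq_mul, inv_mul_cancel_left₀ (pow_pos hε n).ne']

lemma IsA0.scaled (hφ : IsA0 n φ) {ε : ℝ} (hε : 0 < ε) : IsA0 n (scaled n φ ε) :=
  ⟨hφ.1.scaled hε.ne', (integral_scaled φ hε).trans hφ.2⟩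

lemma IsAq.mono {p q : ℕ} (hpq : p ≤ q) (hφ : IsAq n q φ) : IsAq n p φ :=
  ⟨hφ.1, fun i hi hip => hφ.2 i hi (hip.trans hpq)⟩

/-- The negligibility estimates for the single derivative `∂^k F`, the property carried through the
induction on `k`. -/
def NegligibleAt (F : ((Fin n → ℝ) → ℝ) → (Fin n → ℝ) → ℝ) (k : Fin n → ℕ) : Prop :=
  ∀ K : Set (Fin n → ℝ), IsCompact K → ∀ m : ℕ, ∃ q : ℕ, ∀ φ, IsAq n q φ →
    IsUniformBigO K (fun ε => multiD k (F (scaled n φ ε))) m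

lemma negligible_iff_forall_negligibleAt : Negligible n F ↔ ∀ k, NegligibleAt F k := by
  simp only [Negligible, NegligibleAt, IsUniformBigO, zpow_natCast]
  exact ⟨fun h k K hK => h K hK k, fun h K hK k => h k K hK⟩

lemma NegligibleAt.add_single (hFsmooth : ∀ φ, IsA0 n φ → ContDiff ℝ (⊤ : ℕ∞) (F φ))
    (hF : Moderate n F) {k : Fin n → ℕ} {i : Fin n} (hki : ∀ j, i < j → k j = 0)
    (hk : NegligibleAt F k) : NegligibleAt F (k + Pi.single i 1) := by
  intro K hK m
  have hki' := fun j => add_single_apply_eq_zero_of_lt (j := j) hki 1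
  obtain ⟨N, hN⟩ := hF _ (hK.cthickening (r := 1)) (k + Pi.single i 1 + Pi.single i 1)
  obtain ⟨q, hq⟩ := hk _ (hK.cthickening (r := 1)) (m + (m + N))
  refine ⟨max q N, fun φ hφ => ?_⟩
  have h0 := hq φ (hφ.mono (le_max_left q N))
  have h2 : IsUniformBigO _ _ _ := hN φ (hφ.mono (le_max_right q N))
  simp only [multiD_add_single hki', multiD_add_single hki] at h2 ⊢
  have hexp : (m : ℤ) - (m + N : ℕ) = -N := by
    push_cast
    ring
  refine IsUniformBigO.partialD_of_partialD_partialD (c := m + N) i (fun ε hε => ?_) h0 (hexp ▸ h2)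
  exact contDiff_infty.1 (contDiff_multiD k (hFsmooth _ (hφ.1.scaled hε))) 2

end BasicSpace

/-- a moderate function satisfying the zeroth-order negligibility
estimates is negligible. -/
theorem negligible_of_zeroth_order (n : ℕ) (F : ((Fin n → ℝ) → ℝ) → (Fin n → ℝ) → ℝ)
    (hFsmooth : ∀ φ, IsA0 n φ → ContDiff ℝ (⊤ : ℕ∞) (F φ))
    (hF : Moderate n F)
    (h0 : ∀ K : Set (Fin n → ℝ), IsCompact K → ∀ m : ℕ,
      ∃ q : ℕ, ∀ φ, IsAq n q φ →
        ∃ C > 0, ∀ᶠ ε in 𝓝[>] (0:ℝ), ∀ x ∈ K, |F (scaled n φ ε) x| ≤ C * ε ^ m) :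
    Negligible n F := by
  rw [negligible_iff_forall_negligibleAt]
  intro k
  induction k using multiIndex_induction_on_max with
  | zero => simpa only [NegligibleAt, IsUniformBigO, multiD_zero, zpow_natCast] using h0
  | add_single k i hki hk => exact hk.add_single hFsmooth hF hki

end Colombeau
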